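/- Let 𝓜 be an infinite MAD family on ℕ and, for each M ∈ 𝓜, let 𝓗_M be an infinite MAD family on M. Then in the quotient space K_III, the point p∞ belongs to seqClosure (seqClosure (j_III(ℕ))), where j_III(ℕ) is the set of images of principal ultrafilters; hence p∞ does not have sequential order 3 with respect to j_III(ℕ). -/

import Mathlib

/-!
The points `j₃ V` with `V ∈ H*`, `H ∈ 𝓗 M`, are limits of `ℕ`: enumerating `H` injectively, every
ultrafilter limit of the enumeration in `βω` lies in `H*`, which is a single class. Now choose
pairwise distinct `M₀, M₁, … ∈ 𝓜`, sets `Hₖ ∈ 𝓗 Mₖ` and free ultrafilters `Vₖ ∋ Hₖ`. Since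
distinct members of `𝓜` are almost disjoint, each `M ∈ 𝓜` belongs to at most one `Vₖ`, so every
ultrafilter limit of `(Vₖ)` in the compact space `βω` is free and contains no member of `𝓜`, i.e. it
lies in the class `p∞`. Hence `j₃ Vₖ → p∞`, and two limit steps suffice: the points
`M* \ ⋃ H*` are bypassed.

The passage from limits in `βω` to convergence in the quotient is `tendsto_j3_of_limits`.
-/

/-- An ultrafilter on ℕ is free if it is not principal. -/
def FreeUF (U : Ultrafilter ℕ) : Prop := ∀ n : ℕ, U ≠ pure n

/-- `𝓜` is a MAD family on ℕ. -/
def IsMAD (𝓜 : Set (Set ℕ)) : Prop :=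
  (∀ M ∈ 𝓜, M.Infinite) ∧
  (∀ M ∈ 𝓜, ∀ N ∈ 𝓜, M ≠ N → (M ∩ N).Finite) ∧
  (∀ D : Set ℕ, D.Infinite → ∃ M ∈ 𝓜, (D ∩ M).Infinite)

/-- `𝓗` is a MAD family on the infinite set `S ⊆ ℕ`. -/
def IsMADOn (S : Set ℕ) (𝓗 : Set (Set ℕ)) : Prop :=
  (∀ H ∈ 𝓗, H.Infinite ∧ H ⊆ S) ∧
  (∀ H ∈ 𝓗, ∀ H' ∈ 𝓗, H ≠ H' → (H ∩ H').Finite) ∧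
  (∀ D : Set ℕ, D ⊆ S → D.Infinite → ∃ H ∈ 𝓗, (D ∩ H).Infinite)

/-- The relation on βω whose classes are: singletons of principal
ultrafilters; the sets `H*` for `H ∈ 𝓗 M`, `M ∈ 𝓜`; the sets
`M* \ ⋃_{H ∈ 𝓗 M} H*` for `M ∈ 𝓜`; and `ω* \ ⋃_{M∈𝓜} M*`. -/
def relK3 (𝓜 : Set (Set ℕ)) (𝓗 : Set ℕ → Set (Set ℕ))
    (x y : Ultrafilter ℕ) : Prop :=
  x = y ∨ (FreeUF x ∧ FreeUF y ∧
    ((∃ M ∈ 𝓜, ∃ H ∈ 𝓗 M, H ∈ x ∧ H ∈ y) ∨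
     (∃ M ∈ 𝓜, M ∈ x ∧ M ∈ y ∧ (∀ H ∈ 𝓗 M, H ∉ x) ∧ (∀ H ∈ 𝓗 M, H ∉ y)) ∨
     ((∀ M ∈ 𝓜, M ∉ x) ∧ (∀ M ∈ 𝓜, M ∉ y))))

/-- K_III = βω/≈ with the quotient topology. -/
abbrev K3 (𝓜 : Set (Set ℕ)) (𝓗 : Set ℕ → Set (Set ℕ)) : Type :=
  Quot (relK3 𝓜 𝓗)

/-- The natural quotient mapping j_III : βω → K_III. -/
def j3 (𝓜 : Set (Set ℕ)) (𝓗 : Set ℕ → Set (Set ℕ)) :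
    Ultrafilter ℕ → K3 𝓜 𝓗 := Quot.mk (relK3 𝓜 𝓗)

open Filter Topology

theorem FreeUF.notMem_of_finite {U : Ultrafilter ℕ} (hU : FreeUF U) {A : Set ℕ}
    (hA : A.Finite) : A ∉ U := fun h => by
  obtain ⟨n, -, hn⟩ := Ultrafilter.eq_pure_of_finite_mem hA h
  exact hU n hn

theorem exists_freeUF_mem {A : Set ℕ} (hA : A.Infinite) : ∃ U : Ultrafilter ℕ, FreeUF U ∧ A ∈ U := by
  have := hA.cofinite_inf_principal_neBot
  have hle := Ultrafilter.of_le (cofinite ⊓ 𝓟 A)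
  refine ⟨Ultrafilter.of (cofinite ⊓ 𝓟 A), fun n hn => ?_, hle (mem_inf_of_right (mem_principal_self A))⟩
  have h : ({n}ᶜ : Set ℕ) ∈ Ultrafilter.of (cofinite ⊓ 𝓟 A) :=
    hle (mem_inf_of_left (Set.finite_singleton n).compl_mem_cofinite)
  rw [hn, Ultrafilter.mem_pure] at h
  exact h rfl

/-- The basic sets `{x | A ∈ x}` of `βω` are closed. -/
theorem mem_of_tendsto_ultrafilter {ι : Type*} {l : Filter ι} [l.NeBot] {V : ι → Ultrafilter ℕ}
    {X : Ultrafilter ℕ} (hX : Tendsto V l (𝓝 X)) {A : Set ℕ} (h : ∀ᶠ k in l, A ∈ V k) : A ∈ X :=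
  (ultrafilter_isClosed_basic A).mem_of_tendsto hX h

theorem freeUF_of_tendsto {ι : Type*} {l : Filter ι} [l.NeBot] {V : ι → Ultrafilter ℕ}
    {X : Ultrafilter ℕ} (hX : Tendsto V l (𝓝 X)) (h : ∀ n : ℕ, ∀ᶠ k in l, {n} ∉ V k) :
    FreeUF X := by
  rintro n rfl
  have := mem_of_tendsto_ultrafilter hX
    ((h n).mono fun k hk => Ultrafilter.compl_mem_iff_notMem.mpr hk)
  exact Ultrafilter.mem_pure.mp this rfl

/-- By compactness of `βω`, a sequence whose ultrafilter limits in `βω` are all sent by `j₃` to the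
same point converges to that point in the quotient. -/
theorem tendsto_j3_of_limits {𝓜 : Set (Set ℕ)} {𝓗 : Set ℕ → Set (Set ℕ)} {V : ℕ → Ultrafilter ℕ}
    {p : K3 𝓜 𝓗}
    (h : ∀ f : Ultrafilter ℕ, (f : Filter ℕ) ≤ atTop → ∀ X : Ultrafilter ℕ,
      Tendsto V f (𝓝 X) → j3 𝓜 𝓗 X = p) :
    Tendsto (fun k => j3 𝓜 𝓗 (V k)) atTop (𝓝 p) := by
  rw [tendsto_iff_ultrafilter]
  intro f hf
  obtain ⟨X, -, hX⟩ := isCompact_univ.ultrafilter_le_nhds (f.map V) (by simp)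
  have hX : Tendsto V f (𝓝 X) := hX
  rw [← h f hf X hX]
  have hc : Continuous (j3 𝓜 𝓗) := continuous_quot_mk
  exact (hc.tendsto X).comp hX

theorem j3_mem_seqClosure {𝓜 : Set (Set ℕ)} {𝓗 : Set ℕ → Set (Set ℕ)} {M H : Set ℕ}
    (hM : M ∈ 𝓜) (hH : H ∈ 𝓗 M) (hHinf : H.Infinite) {U : Ultrafilter ℕ} (hU : FreeUF U)
    (hHU : H ∈ U) :
    j3 𝓜 𝓗 U ∈ seqClosure (Set.range fun n : ℕ => j3 𝓜 𝓗 (pure n)) := by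
  let e := hHinf.natEmbedding
  have he : Function.Injective fun k => (e k : ℕ) := Subtype.val_injective.comp e.injective
  refine ⟨fun k => j3 𝓜 𝓗 (pure (e k : ℕ)), fun k => ⟨_, rfl⟩, tendsto_j3_of_limits ?_⟩
  intro f hf X hX
  have hHX : H ∈ X := mem_of_tendsto_ultrafilter hX
    (Eventually.of_forall fun k => Ultrafilter.mem_pure.mpr (e k).2)
  have hXfree : FreeUF X := freeUF_of_tendsto hX fun n => by
    have := he.tendsto_cofinite.eventually (Set.finite_singleton n).compl_mem_cofinite
    rw [Nat.cofinite_eq_atTop] at this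
    exact Eventually.mono (hf this) fun k hk h => hk (Ultrafilter.mem_pure.mp h)
  exact Quot.sound (Or.inr ⟨hXfree, hU, Or.inl ⟨M, hM, H, hH, hHX, hHU⟩⟩)

/-!
With 𝓜 an infinite MAD family on ℕ and, for each `M ∈ 𝓜`, `𝓗 M` an infinite
MAD family on `M`, the point `p∞ = j_III(ω* \ ⋃ M*)` (represented as
`j₃ Uinf` for a free ultrafilter `Uinf` containing no member of 𝓜) lies in
`seqClosure (seqClosure (j_III(ℕ)))`; hence `p∞` does not have sequential
order 3 with respect to `j_III(ℕ)`.
-/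
theorem statement11 (𝓜 : Set (Set ℕ)) (hMAD : IsMAD 𝓜) (hinf : 𝓜.Infinite)
    (𝓗 : Set ℕ → Set (Set ℕ))
    (h𝓗 : ∀ M ∈ 𝓜, IsMADOn M (𝓗 M) ∧ (𝓗 M).Infinite)
    (Uinf : Ultrafilter ℕ) (hfree : FreeUF Uinf)
    (hUinf : ∀ M ∈ 𝓜, M ∉ Uinf) :
    j3 𝓜 𝓗 Uinf ∈
      seqClosure (seqClosure (Set.range fun n : ℕ => j3 𝓜 𝓗 (pure n))) := by
  let e := hinf.natEmbedding
  choose H hH using fun k => (h𝓗 (e k) (e k).2).2.nonempty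
  have hHM k : (H k).Infinite ∧ H k ⊆ e k := (h𝓗 (e k) (e k).2).1.1 _ (hH k)
  choose V hVfree hHV using fun k => exists_freeUF_mem (hHM k).1
  refine ⟨fun k => j3 𝓜 𝓗 (V k),
    fun k => j3_mem_seqClosure (e k).2 (hH k) (hHM k).1 (hVfree k) (hHV k),
    tendsto_j3_of_limits ?_⟩
  intro f hf X hX
  have hXfree : FreeUF X := freeUF_of_tendsto hX fun n =>
    Eventually.of_forall fun k => (hVfree k).notMem_of_finite (Set.finite_singleton n)
  have hXM : ∀ M ∈ 𝓜, M ∉ X := by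
    intro M hM
    rw [← Ultrafilter.compl_mem_iff_notMem]
    refine mem_of_tendsto_ultrafilter hX ?_
    have hne : ∀ᶠ k in atTop, (e k) ≠ ⟨M, hM⟩ := by
      rw [← Nat.cofinite_eq_atTop]
      exact e.injective.tendsto_cofinite.eventually (Set.finite_singleton _).compl_mem_cofinite
    refine Eventually.mono (hf hne) fun k hk => Ultrafilter.compl_mem_iff_notMem.mpr fun hMV => ?_
    -- `Vₖ` would contain the finite set `Mₖ ∩ M`.
    exact (hVfree k).notMem_of_finite
      (hMAD.2.1 _ (e k).2 M hM fun h => hk (Subtype.ext h))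
      (inter_mem (mem_of_superset (hHV k) (hHM k).2) hMV)
  exact Quot.sound (Or.inr ⟨hXfree, hfree, Or.inr (Or.inr ⟨hXM, hUinf⟩)⟩)
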